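/- (Unique continuation; local form of Lemma 2.5 of the paper.) Let J be an almost complex structure on a connected open set U ⊆ ℂ² and let α be a closed J-anti-invariant 2-form on U. If α vanishes identically on some nonempty open subset of U, then α vanishes identically on U. -/

import Mathlib

open Complex Metric

/-- An almost complex structure on an open set `U ⊆ ℂ²`. -/
def IsAlmostComplexOn (J : ℂ × ℂ → (ℂ × ℂ →L[ℝ] ℂ × ℂ)) (U : Set (ℂ × ℂ)) : Prop :=
  ContDiffOn ℝ (⊤ : ℕ∞) J U ∧ ∀ x ∈ U, ∀ X : ℂ × ℂ, J x (J x X) = -X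

/-- The open unit disk in `ℂ`. -/
def unitDisk : Set ℂ := ball (0 : ℂ) 1

/-- An embedded `J`-holomorphic disk in `U`. -/
def IsEmbeddedJHolDisk (J : ℂ × ℂ → (ℂ × ℂ →L[ℝ] ℂ × ℂ)) (U : Set (ℂ × ℂ))
    (u : ℂ → ℂ × ℂ) : Prop :=
  ContDiffOn ℝ (⊤ : ℕ∞) u unitDisk ∧ Set.InjOn u unitDisk ∧
    Set.MapsTo u unitDisk U ∧
    (∀ z ∈ unitDisk, Function.Injective (fderiv ℝ u z)) ∧
    ∀ z ∈ unitDisk, ∀ v : ℂ, fderiv ℝ u z (Complex.I * v) = J (u z) (fderiv ℝ u z v)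

/-- A (smooth, alternating) 2-form on an open set `U ⊆ ℂ²`. -/
def IsTwoFormOn (α : ℂ × ℂ → (ℂ × ℂ →L[ℝ] ℂ × ℂ →L[ℝ] ℝ)) (U : Set (ℂ × ℂ)) : Prop :=
  ContDiffOn ℝ (⊤ : ℕ∞) α U ∧ ∀ x ∈ U, ∀ X : ℂ × ℂ, α x X X = 0

/-- `J`-anti-invariance of a 2-form on `U`. -/
def IsJAntiInvariantOn (J : ℂ × ℂ → (ℂ × ℂ →L[ℝ] ℂ × ℂ))
    (α : ℂ × ℂ → (ℂ × ℂ →L[ℝ] ℂ × ℂ →L[ℝ] ℝ)) (U : Set (ℂ × ℂ)) : Prop :=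
  ∀ x ∈ U, ∀ X Y : ℂ × ℂ, α x (J x X) (J x Y) = -α x X Y

/-- Closedness of a 2-form on `U`. -/
def IsClosedTwoFormOn (α : ℂ × ℂ → (ℂ × ℂ →L[ℝ] ℂ × ℂ →L[ℝ] ℝ))
    (U : Set (ℂ × ℂ)) : Prop :=
  ∀ x ∈ U, ∀ X Y Z : ℂ × ℂ,
    fderiv ℝ α x X Y Z - fderiv ℝ α x Y X Z + fderiv ℝ α x Z X Y = 0

section UniqueContinuationAux
open MeasureTheory Filter Topology
open scoped ContDiff
section UC
set_option linter.unusedSectionVars false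
variable {E : Type*} [NormedAddCommGroup E] [NormedSpace ℝ E] [FiniteDimensional ℝ E]

noncomputable def trc : (E →L[ℝ] E) →ₗ[ℝ] ℝ := (LinearMap.trace ℝ E) ∘ₗ (ContinuousLinearMap.coeLM ℝ)

lemma trc_smulRight (l : E →L[ℝ] ℝ) (v : E) : trc (l.smulRight v) = l v := by
  have : trc (l.smulRight v) = LinearMap.trace ℝ E ((l : E →ₗ[ℝ] ℝ).smulRight v) := rfl
  rw [this]
  simp

lemma trc_eq (f : E →L[ℝ] E) : trc f = ∑ i, (Module.finBasis ℝ E).coord i (f (Module.finBasis ℝ E i)) := by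
  have : trc f = LinearMap.trace ℝ E (f : E →ₗ[ℝ] E) := rfl
  rw [this, LinearMap.trace_eq_matrix_trace ℝ (Module.finBasis ℝ E), Matrix.trace]
  simp [LinearMap.toMatrix_apply]

lemma trc_cont : Continuous (trc : (E →L[ℝ] E) →ₗ[ℝ] ℝ) := LinearMap.continuous_of_finiteDimensional _

noncomputable def dvg (T : E → E) (x : E) : ℝ := trc (fderiv ℝ T x)

lemma dvg_add {S T : E → E} {x : E} (hS : DifferentiableAt ℝ S x) (hT : DifferentiableAt ℝ T x) :
    dvg (fun y => S y + T y) x = dvg S x + dvg T x := by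
  unfold dvg
  rw [← map_add]; congr 1
  exact fderiv_fun_add hS hT

lemma dvg_sub {S T : E → E} {x : E} (hS : DifferentiableAt ℝ S x) (hT : DifferentiableAt ℝ T x) :
    dvg (fun y => S y - T y) x = dvg S x - dvg T x := by
  unfold dvg
  rw [← map_sub]; congr 1
  exact fderiv_fun_sub hS hT

lemma dvg_smul {h : E → ℝ} {T : E → E} {x : E} (hh : DifferentiableAt ℝ h x)
    (hT : DifferentiableAt ℝ T x) :
    dvg (fun y => h y • T y) x = h x * dvg T x + fderiv ℝ h x (T x) := by
  unfold dvg
  rw [fderiv_fun_smul hh hT, map_add, trc_smulRight, map_smul, smul_eq_mul]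

lemma dvg_const (c : E) (x : E) : dvg (fun _ => c) x = 0 := by
  unfold dvg; simp

lemma dvg_sum {ι : Type*} (s : Finset ι) {T : ι → E → E} {x : E}
    (hT : ∀ i ∈ s, DifferentiableAt ℝ (T i) x) :
    dvg (fun y => ∑ i ∈ s, T i y) x = ∑ i ∈ s, dvg (T i) x := by
  unfold dvg
  rw [← map_sum]; congr 1
  exact fderiv_fun_sum hT

lemma dvg_continuous {T : E → E} (hT : ContDiff ℝ ∞ T) : Continuous (dvg T) :=
  trc_cont.comp (hT.continuous_fderiv (by simp))

lemma integral_dvg [MeasurableSpace E] [BorelSpace E] (μ : Measure E) [μ.IsAddHaarMeasure]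
    {T : E → E} (hT : ContDiff ℝ ∞ T) (hc : HasCompactSupport T) : ∫ x, dvg T x ∂μ = 0 := by
  have h1 : ∀ i, ContDiff ℝ ∞ (fun x => (Module.finBasis ℝ E).coord i (T x)) := fun i =>
    (LinearMap.toContinuousLinearMap ((Module.finBasis ℝ E).coord i)).contDiff.comp hT
  have hcs : ∀ i, HasCompactSupport (fun x => (Module.finBasis ℝ E).coord i (T x)) := fun i =>
    hc.comp_left (map_zero _)
  have key : ∀ x i, (Module.finBasis ℝ E).coord i (fderiv ℝ T x (Module.finBasis ℝ E i)) =
      fderiv ℝ (fun x => (Module.finBasis ℝ E).coord i (T x)) x (Module.finBasis ℝ E i) := by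
    intro x i
    have := ((LinearMap.toContinuousLinearMap ((Module.finBasis ℝ E).coord i)).hasFDerivAt.comp x
      (hT.differentiable (by simp) x).hasFDerivAt).fderiv
    have e : (fun x => (Module.finBasis ℝ E).coord i (T x)) =
      (LinearMap.toContinuousLinearMap ((Module.finBasis ℝ E).coord i)) ∘ T := rfl
    rw [e, this]; rfl
  simp only [dvg, trc_eq, key]
  have hInteg : ∀ i, Integrable (fun x => fderiv ℝ (fun x => (Module.finBasis ℝ E).coord i (T x)) x (Module.finBasis ℝ E i)) μ := by
    intro i
    apply Continuous.integrable_of_hasCompactSupport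
    · exact ((h1 i).continuous_fderiv (by simp)).clm_apply continuous_const
    · exact (hcs i).fderiv_apply ℝ _
  rw [integral_finsetSum _ (fun i _ => hInteg i)]
  apply Finset.sum_eq_zero
  intro i _
  have := integral_mul_fderiv_eq_neg_fderiv_mul_of_integrable (μ := μ) (𝕜 := ℝ) (f := fun _ : E => (1:ℝ))
    (g := fun x => (Module.finBasis ℝ E).coord i (T x)) (v := Module.finBasis ℝ E i)
    (by simp) (by simpa using hInteg i)
    (by simpa using ((h1 i).continuous.integrable_of_hasCompactSupport (hcs i)))
    (by intro x; fun_prop) (fun x _ => (h1 i).differentiable (by simp) x)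
  simpa using this


lemma scal (C l u v xu yu xv yv a b : ℝ) (hC : 0 ≤ C) (hl : 0 ≤ l) :
    C * |u| * (|xv| + |yv|) ≤
      ((xu - yv - l * (a * u - b * v)) ^ 2 + (xv + yu - l * (a * v + b * u)) ^ 2)
      + ((xu + yv + l * (a * u + b * v)) ^ 2 + (xv - yu + l * (a * v - b * u)) ^ 2)
      + C ^ 2 * u ^ 2 + C * l * (|a| + |b|) * u ^ 2 := by
  set A := xu - yv - l * (a * u - b * v) with hA
  set B := xv + yu - l * (a * v + b * u) with hB
  set A' := xu + yv + l * (a * u + b * v) with hA'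
  set B' := xv - yu + l * (a * v - b * u) with hB'
  have e1 : xv = (B + B') / 2 + l * b * u := by rw [hB, hB']; ring
  have e2 : yv = (A' - A) / 2 - l * a * u := by rw [hA, hA']; ring
  have b1 : |xv| ≤ (|B| + |B'|) / 2 + l * |b| * |u| := by
    rw [e1]
    calc _ ≤ |(B + B') / 2| + |l * b * u| := abs_add_le _ _
      _ ≤ _ := by
        rw [abs_div, abs_mul, abs_mul, abs_of_nonneg hl, abs_two]
        gcongr
        exact abs_add_le _ _
  have b2 : |yv| ≤ (|A'| + |A|) / 2 + l * |a| * |u| := by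
    rw [e2]
    calc _ ≤ |(A' - A) / 2| + |l * a * u| := abs_sub _ _
      _ ≤ _ := by
        rw [abs_div, abs_mul, abs_mul, abs_of_nonneg hl, abs_two]
        gcongr
        exact abs_sub _ _
  have h : C * |u| * (|xv| + |yv|) ≤ C * |u| * (((|B| + |B'|) / 2 + l * |b| * |u|)
      + ((|A'| + |A|) / 2 + l * |a| * |u|)) := by gcongr
  refine h.trans ?_
  rw [← sq_abs A, ← sq_abs B, ← sq_abs A', ← sq_abs B', ← sq_abs u]
  nlinarith [sq_nonneg (|A| - C * |u| / 2), sq_nonneg (|B| - C * |u| / 2),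
    sq_nonneg (|A'| - C * |u| / 2), sq_nonneg (|B'| - C * |u| / 2), sq_nonneg |A|, sq_nonneg |B|,
    sq_nonneg |A'|, sq_nonneg |B'|, sq_nonneg (C * |u|)]

/-- the gradient-type field -/
noncomputable def Wf (X : E) (Y : E → E) (φ : E → ℝ) (y : E) : E :=
  (fderiv ℝ φ y X) • X + (fderiv ℝ φ y (Y y)) • Y y

/-- the null-Lagrangian field -/
noncomputable def Tf (X : E) (Y : E → E) (v : E → ℝ) (y : E) : E :=
  (fderiv ℝ v y (Y y)) • X - (fderiv ℝ v y X) • Y y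

noncomputable def Vf (X : E) (Y : E → E) (y : E) : E :=
  fderiv ℝ Y y X - dvg Y y • X

noncomputable def Qf (X : E) (Y : E → E) (φ u v : E → ℝ) (l : ℝ) (y : E) : E :=
  (4 * u y) • Tf X Y v y + (2 * l * (u y ^ 2 + v y ^ 2)) • Wf X Y φ y

lemma contDiff_fderiv_app {f : E → ℝ} {Y : E → E} (hf : ContDiff ℝ ∞ f) (hY : ContDiff ℝ ∞ Y) :
    ContDiff ℝ ∞ (fun y => fderiv ℝ f y (Y y)) :=
  (hf.fderiv_right (m := ∞) (by simp)).clm_apply hY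

lemma Wf_contDiff (X : E) {Y : E → E} {φ : E → ℝ} (hY : ContDiff ℝ ∞ Y) (hφ : ContDiff ℝ ∞ φ) :
    ContDiff ℝ ∞ (Wf X Y φ) :=
  ((contDiff_fderiv_app hφ contDiff_const).smul contDiff_const).add
    ((contDiff_fderiv_app hφ hY).smul hY)

lemma Tf_contDiff (X : E) {Y : E → E} {φ : E → ℝ} (hY : ContDiff ℝ ∞ Y) (hφ : ContDiff ℝ ∞ φ) :
    ContDiff ℝ ∞ (Tf X Y φ) :=
  ((contDiff_fderiv_app hφ hY).smul contDiff_const).sub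
    ((contDiff_fderiv_app hφ contDiff_const).smul hY)

lemma Qf_contDiff (X : E) {Y : E → E} {φ u v : E → ℝ} (hY : ContDiff ℝ ∞ Y)
    (hφ : ContDiff ℝ ∞ φ) (hu : ContDiff ℝ ∞ u) (hv : ContDiff ℝ ∞ v) (l : ℝ) :
    ContDiff ℝ ∞ (Qf X Y φ u v l) :=
  ((contDiff_const.mul hu).smul (Tf_contDiff X hY hv)).add
    ((contDiff_const.mul ((hu.pow 2).add (hv.pow 2))).smul (Wf_contDiff X hY hφ))

lemma Vf_continuous (X : E) {Y : E → E} (hY : ContDiff ℝ ∞ Y) : Continuous (Vf X Y) :=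
  ((hY.continuous_fderiv (by simp)).clm_apply continuous_const).sub
    ((dvg_continuous hY).smul continuous_const)

lemma ContDiff.dAt {F : Type*} [NormedAddCommGroup F] [NormedSpace ℝ F] {f : E → F}
    (hf : ContDiff ℝ ∞ f) (x : E) : DifferentiableAt ℝ f x := hf.differentiable (by simp) x

lemma dvg_Tf (X : E) {Y : E → E} {v : E → ℝ} (hY : ContDiff ℝ ∞ Y) (hv : ContDiff ℝ ∞ v) (x : E) :
    dvg (Tf X Y v) x = fderiv ℝ v x (Vf X Y x) := by
  have hd : ContDiff ℝ ∞ (fderiv ℝ v) := hv.fderiv_right (m := ∞) (by simp)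
  have h1 := (contDiff_fderiv_app hv hY).dAt x
  have h2 := (contDiff_fderiv_app hv (contDiff_const (c := X))).dAt x
  have : dvg (Tf X Y v) x = dvg (fun y => (fderiv ℝ v y (Y y)) • X) x
      - dvg (fun y => (fderiv ℝ v y X) • Y y) x :=
    dvg_sub (h1.smul (differentiableAt_const X)) (h2.smul (hY.dAt x))
  rw [this, dvg_smul h1 (differentiableAt_const X), dvg_smul h2 (hY.dAt x), dvg_const,
    fderiv_clm_apply (hd.dAt x) (hY.dAt x), fderiv_clm_apply (hd.dAt x) (differentiableAt_const X)]
  have hsymm : IsSymmSndFDerivAt ℝ v x := hv.contDiffAt.isSymmSndFDerivAt (by simp; exact WithTop.coe_le_coe.2 le_top)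
  have := hsymm X (Y x)
  simp [Vf, this]
  ring

lemma dvg_ident (X : E) {Y : E → E} {φ u v : E → ℝ} (hY : ContDiff ℝ ∞ Y)
    (hφ : ContDiff ℝ ∞ φ) (hu : ContDiff ℝ ∞ u) (hv : ContDiff ℝ ∞ v) (l : ℝ) (x : E) :
    ((fderiv ℝ u x X - fderiv ℝ v x (Y x) - l * (fderiv ℝ φ x X * u x - fderiv ℝ φ x (Y x) * v x)) ^ 2
    + (fderiv ℝ v x X + fderiv ℝ u x (Y x) - l * (fderiv ℝ φ x X * v x + fderiv ℝ φ x (Y x) * u x)) ^ 2)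
    + dvg (Qf X Y φ u v l) x =
    ((fderiv ℝ u x X + fderiv ℝ v x (Y x) + l * (fderiv ℝ φ x X * u x + fderiv ℝ φ x (Y x) * v x)) ^ 2
    + (fderiv ℝ v x X - fderiv ℝ u x (Y x) + l * (fderiv ℝ φ x X * v x - fderiv ℝ φ x (Y x) * u x)) ^ 2)
    + 4 * u x * fderiv ℝ v x (Vf X Y x) + 2 * l * (u x ^ 2 + v x ^ 2) * dvg (Wf X Y φ) x := by
  have hT := (Tf_contDiff X hY hv).dAt x
  have hW := (Wf_contDiff X hY hφ).dAt x
  have h1 : DifferentiableAt ℝ (fun y => 4 * u y) x := (contDiff_const.mul hu).dAt x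
  have h2 : DifferentiableAt ℝ (fun y => 2 * l * (u y ^ 2 + v y ^ 2)) x :=
    (contDiff_const.mul ((hu.pow 2).add (hv.pow 2))).dAt x
  have hQ : dvg (Qf X Y φ u v l) x = dvg (fun y => (4 * u y) • Tf X Y v y) x
      + dvg (fun y => (2 * l * (u y ^ 2 + v y ^ 2)) • Wf X Y φ y) x :=
    dvg_add (h1.smul hT) (h2.smul hW)
  have d1 : HasFDerivAt (fun y => 4 * u y) ((4:ℝ) • fderiv ℝ u x) x :=
    (hu.dAt x).hasFDerivAt.const_mul 4
  have d2 : HasFDerivAt (fun y => 2 * l * (u y ^ 2 + v y ^ 2))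
      ((2 * l) • ((2 * u x) • fderiv ℝ u x + (2 * v x) • fderiv ℝ v x)) x := by
    have := (((hu.dAt x).hasFDerivAt.pow 2).add ((hv.dAt x).hasFDerivAt.pow 2)).const_mul (2 * l)
    simpa using this
  rw [hQ, dvg_smul h1 hT, dvg_smul h2 hW, dvg_Tf X hY hv, d1.fderiv, d2.fderiv]
  simp [Tf, Wf]
  ring

lemma exists_norm_bound {ι : Type*} [Fintype ι] (X : ι → E) (Y : ι → E → E)
    (hY : ∀ j, Continuous (Y j)) {K : Set E} (hK : IsCompact K)
    (hspan : ∀ x ∈ K, ∀ f : E →L[ℝ] ℝ, (∀ j, f (X j) = 0 ∧ f (Y j x) = 0) → f = 0) :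
    ∃ C : ℝ, 0 ≤ C ∧ ∀ x ∈ K, ∀ f : E →L[ℝ] ℝ, ‖f‖ ≤ C * ∑ j, (|f (X j)| + |f (Y j x)|) := by
  have hc : IsCompact (K ×ˢ Metric.sphere (0 : E →L[ℝ] ℝ) 1) := hK.prod (isCompact_sphere _ _)
  obtain ⟨m, hm, hmin⟩ := hc.exists_forall_le' (a := 0)
    (f := fun p : E × (E →L[ℝ] ℝ) => ∑ j, (|p.2 (X j)| + |p.2 (Y j p.1)|))
    (by
      apply Continuous.continuousOn
      have := hY
      fun_prop)
    (by
      rintro ⟨x, f⟩ ⟨hx, hf⟩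
      have h0 : 0 ≤ ∑ j, (|f (X j)| + |f (Y j x)|) := Finset.sum_nonneg fun j _ => by positivity
      refine lt_of_le_of_ne h0 fun h => ?_
      have := (Finset.sum_eq_zero_iff_of_nonneg (fun j _ => by positivity)).1 h.symm
      have hf0 : f = 0 := hspan x hx f fun j => by
        have := this j (Finset.mem_univ j)
        have h1 := abs_nonneg (f (X j))
        have h2 := abs_nonneg (f (Y j x))
        exact ⟨abs_eq_zero.1 (by linarith), abs_eq_zero.1 (by linarith)⟩
      simp [hf0] at hf)
  refine ⟨1 / m, by positivity, fun x hx f => ?_⟩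
  rcases eq_or_ne f 0 with rfl | hf
  · simp
  have hn : 0 < ‖f‖ := norm_pos_iff.2 hf
  have := hmin (x, (‖f‖⁻¹) • f) ⟨hx, by simp [norm_smul, hn.ne']⟩
  have e : ∑ j, (|((‖f‖⁻¹) • f) (X j)| + |((‖f‖⁻¹) • f) (Y j x)|)
      = ‖f‖⁻¹ * ∑ j, (|f (X j)| + |f (Y j x)|) := by
    rw [Finset.mul_sum]
    refine Finset.sum_congr rfl fun j _ => ?_
    simp [abs_mul]; ring
  simp only [e] at this
  rw [inv_mul_eq_div, le_div_iff₀ hn] at this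
  rw [one_div, inv_mul_eq_div, le_div_iff₀ hm]
  linarith

lemma carleman_pointwise {ι : Type*} [Fintype ι] (X : ι → E) (Y : ι → E → E)
    (hY : ∀ j, ContDiff ℝ ∞ (Y j)) {K : Set E} (hK : IsCompact K)
    (hspan : ∀ x ∈ K, ∀ f : E →L[ℝ] ℝ, (∀ j, f (X j) = 0 ∧ f (Y j x) = 0) → f = 0) :
    ∃ C C' : ℝ, 0 ≤ C ∧ 0 ≤ C' ∧ ∀ (φ u v : E → ℝ) (l : ℝ), ContDiff ℝ ∞ φ → ContDiff ℝ ∞ u →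
      ContDiff ℝ ∞ v → 0 ≤ l → ∀ x ∈ K,
      (l * (2 * ∑ j, dvg (Wf (X j) (Y j) φ) x
        - C * ∑ j, (|fderiv ℝ φ x (X j)| + |fderiv ℝ φ x (Y j x)|)) - C') * (u x ^ 2 + v x ^ 2)
      ≤ 2 * ∑ j, ((fderiv ℝ u x (X j) - fderiv ℝ v x (Y j x) - l * (fderiv ℝ φ x (X j) * u x - fderiv ℝ φ x (Y j x) * v x)) ^ 2
    + (fderiv ℝ v x (X j) + fderiv ℝ u x (Y j x) - l * (fderiv ℝ φ x (X j) * v x + fderiv ℝ φ x (Y j x) * u x)) ^ 2)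
    + ∑ j, dvg (Qf (X j) (Y j) φ u v l) x := by
  obtain ⟨C1, hC1, hb⟩ := exists_norm_bound X Y (fun j => (hY j).continuous) hK hspan
  obtain ⟨C2, hC2⟩ := hK.exists_bound_of_continuousOn (f := fun x => ∑ j, ‖Vf (X j) (Y j) x‖)
    (continuous_finsetSum _ fun j _ => (Vf_continuous (X j) (hY j)).norm).continuousOn
  have hC2' : ∀ x ∈ K, ∑ j, ‖Vf (X j) (Y j) x‖ ≤ |C2| := fun x hx =>
    (le_abs_self _).trans ((hC2 x hx).trans (le_abs_self _))
  set C := 4 * |C2| * C1 with hC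
  have hCn : 0 ≤ C := by positivity
  refine ⟨C, (Fintype.card ι) * C ^ 2, hCn, by positivity, ?_⟩
  intro φ u v l hφ hu hv hl x hx
  have hVb : |4 * u x * ∑ j, fderiv ℝ v x (Vf (X j) (Y j) x)| ≤
      C * |u x| * ∑ j, (|fderiv ℝ v x (X j)| + |fderiv ℝ v x (Y j x)|) := by
    rw [abs_mul, abs_mul, abs_of_nonneg (by norm_num : (0:ℝ) ≤ 4)]
    have h1 : |∑ j, fderiv ℝ v x (Vf (X j) (Y j) x)| ≤ ‖fderiv ℝ v x‖ * |C2| := by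
      calc _ ≤ ∑ j, |fderiv ℝ v x (Vf (X j) (Y j) x)| := Finset.abs_sum_le_sum_abs _ _
        _ ≤ ∑ j, ‖fderiv ℝ v x‖ * ‖Vf (X j) (Y j) x‖ :=
          Finset.sum_le_sum fun j _ => (fderiv ℝ v x).le_opNorm _
        _ = ‖fderiv ℝ v x‖ * ∑ j, ‖Vf (X j) (Y j) x‖ := by rw [Finset.mul_sum]
        _ ≤ _ := by gcongr; exact hC2' x hx
    calc _ ≤ 4 * |u x| * (‖fderiv ℝ v x‖ * |C2|) := by gcongr
      _ ≤ 4 * |u x| * ((C1 * ∑ j, (|fderiv ℝ v x (X j)| + |fderiv ℝ v x (Y j x)|)) * |C2|) := by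
        gcongr; exact hb x hx _
      _ = _ := by rw [hC]; ring
  have hs := Finset.sum_le_sum fun j (_ : j ∈ Finset.univ) =>
    scal C l (u x) (v x) (fderiv ℝ u x (X j)) (fderiv ℝ u x (Y j x)) (fderiv ℝ v x (X j))
      (fderiv ℝ v x (Y j x)) (fderiv ℝ φ x (X j)) (fderiv ℝ φ x (Y j x)) hCn hl
  have hid := Finset.sum_congr rfl fun j (_ : j ∈ Finset.univ) =>
    dvg_ident (X j) (hY j) hφ hu hv l x
  simp only [Finset.sum_add_distrib (f := fun j => _ ^ 2 + _ ^ 2)] at hid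
  rw [← Finset.mul_sum] at hs
  simp only [Finset.sum_add_distrib, ← Finset.mul_sum, ← Finset.sum_mul, Finset.sum_const,
    Finset.card_univ, nsmul_eq_mul] at hs hid hVb ⊢
  have h3 := (abs_le.1 hVb).1
  have h4 : (Fintype.card ι * C ^ 2 + l * (C * (∑ j, |fderiv ℝ φ x (X j)| + ∑ j, |fderiv ℝ φ x (Y j x)|))) * u x ^ 2
    ≤ (Fintype.card ι * C ^ 2 + l * (C * (∑ j, |fderiv ℝ φ x (X j)| + ∑ j, |fderiv ℝ φ x (Y j x)|))) * (u x ^ 2 + v x ^ 2) := by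
    have : 0 ≤ ∑ j, |fderiv ℝ φ x (X j)| + ∑ j, |fderiv ℝ φ x (Y j x)| := by positivity
    gcongr
    nlinarith [sq_nonneg (v x)]
  linarith


lemma fderiv_expw {ψ : E → ℝ} (hψ : ContDiff ℝ ∞ ψ) (s c0 : ℝ) (x : E) :
    fderiv ℝ (fun y => Real.exp (s * ψ y) - c0) x = (s * Real.exp (s * ψ x)) • fderiv ℝ ψ x := by
  have := (((hψ.dAt x).hasFDerivAt.const_mul s).exp.sub_const c0).fderiv
  rw [this, smul_smul, mul_comm]

lemma exists_weight {ι : Type*} [Fintype ι] (X : ι → E) (Y : ι → E → E)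
    (hY : ∀ j, ContDiff ℝ ∞ (Y j)) {K : Set E} (hK : IsCompact K)
    (hspan : ∀ x ∈ K, ∀ f : E →L[ℝ] ℝ, (∀ j, f (X j) = 0 ∧ f (Y j x) = 0) → f = 0)
    {ψ : E → ℝ} (hψ : ContDiff ℝ ∞ ψ) (hdψ : ∀ x ∈ K, fderiv ℝ ψ x ≠ 0) (C : ℝ) :
    ∃ s c : ℝ, 0 < s ∧ 0 < c ∧ ∀ c0 : ℝ, ∀ x ∈ K,
      c ≤ 2 * ∑ j, dvg (Wf (X j) (Y j) (fun y => Real.exp (s * ψ y) - c0)) x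
        - C * ∑ j, (|fderiv ℝ (fun y => Real.exp (s * ψ y) - c0) x (X j)|
          + |fderiv ℝ (fun y => Real.exp (s * ψ y) - c0) x (Y j x)|) := by
  have hcX : ∀ j, Continuous fun x => fderiv ℝ ψ x (X j) := fun j =>
    (contDiff_fderiv_app hψ contDiff_const).continuous
  have hcY : ∀ j, Continuous fun x => fderiv ℝ ψ x (Y j x) := fun j =>
    (contDiff_fderiv_app hψ (hY j)).continuous
  obtain ⟨m, hm, hmin⟩ := hK.exists_forall_le' (a := 0)
    (f := fun x => ∑ j, (fderiv ℝ ψ x (X j) ^ 2 + fderiv ℝ ψ x (Y j x) ^ 2))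
    (by apply Continuous.continuousOn; fun_prop)
    (by
      intro x hx
      have h0 : 0 ≤ ∑ j, (fderiv ℝ ψ x (X j) ^ 2 + fderiv ℝ ψ x (Y j x) ^ 2) :=
        Finset.sum_nonneg fun j _ => by positivity
      refine lt_of_le_of_ne h0 fun h => hdψ x hx (hspan x hx _ fun j => ?_)
      have := (Finset.sum_eq_zero_iff_of_nonneg (fun j _ => by positivity)).1 h.symm j
        (Finset.mem_univ j)
      have h1 := sq_nonneg (fderiv ℝ ψ x (X j))
      have h2 := sq_nonneg (fderiv ℝ ψ x (Y j x))
      exact ⟨pow_eq_zero_iff (two_ne_zero) |>.1 (by linarith),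
        pow_eq_zero_iff (two_ne_zero) |>.1 (by linarith)⟩)
  obtain ⟨B, hB⟩ := hK.exists_bound_of_continuousOn
    (f := fun x => 2 * ∑ j, dvg (Wf (X j) (Y j) ψ) x
        - C * ∑ j, (|fderiv ℝ ψ x (X j)| + |fderiv ℝ ψ x (Y j x)|))
    (by
      apply Continuous.continuousOn
      have := fun j => dvg_continuous (Wf_contDiff (X j) (hY j) hψ)
      fun_prop)
  set s := (|B| + 1) / m with hs
  have hspos : 0 < s := by positivity
  obtain ⟨c, hc, hcmin⟩ := hK.exists_forall_le' (a := 0)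
    (f := fun x => s * Real.exp (s * ψ x))
    (by apply Continuous.continuousOn; have := hψ.continuous; fun_prop)
    (fun x _ => by positivity)
  refine ⟨s, c, hspos, hc, fun c0 x hx => ?_⟩
  have hW : ∀ j, dvg (Wf (X j) (Y j) (fun y => Real.exp (s * ψ y) - c0)) x =
      s * Real.exp (s * ψ x) * (dvg (Wf (X j) (Y j) ψ) x
        + s * (fderiv ℝ ψ x (X j) ^ 2 + fderiv ℝ ψ x (Y j x) ^ 2)) := by
    intro j
    have e : Wf (X j) (Y j) (fun y => Real.exp (s * ψ y) - c0) =
        fun y => (s * Real.exp (s * ψ y)) • Wf (X j) (Y j) ψ y := by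
      funext y
      simp [Wf, fderiv_expw hψ, smul_smul]
    have hd := (((hψ.dAt x).hasFDerivAt.const_mul s).exp.const_mul s)
    rw [e, dvg_smul hd.differentiableAt ((Wf_contDiff (X j) (hY j) hψ).dAt x), hd.fderiv]
    simp [Wf]
    ring
  simp only [hW, fderiv_expw hψ]
  have hE : 0 < s * Real.exp (s * ψ x) := by positivity
  have habs : ∀ z : E, |((s * Real.exp (s * ψ x)) • fderiv ℝ ψ x) z|
      = s * Real.exp (s * ψ x) * |fderiv ℝ ψ x z| := fun z => by
    simp [abs_mul, abs_of_pos hspos]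
  simp only [habs, ← mul_add, ← Finset.mul_sum, Finset.sum_add_distrib (g := fun j => s * _)]
  have h1 := (abs_le.1 ((Real.norm_eq_abs _).symm.le.trans ((hB x hx).trans (le_abs_self B)))).1
  have h2 : |B| + 1 ≤ s * ∑ j, (fderiv ℝ ψ x (X j) ^ 2 + fderiv ℝ ψ x (Y j x) ^ 2) := by
    calc |B| + 1 = s * m := by rw [hs]; field_simp
      _ ≤ _ := by gcongr; exact hmin x hx
  have h3 := hcmin x hx
  have hB0 := abs_nonneg B
  nlinarith

lemma uc_abstract [MeasurableSpace E] [BorelSpace E] (μ : Measure E) [μ.IsAddHaarMeasure] {ι : Type*} [Fintype ι]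
    (X : ι → E) (Y : ι → E → E)
    (hY : ∀ j, ContDiff ℝ ∞ (Y j)) {K : Set E} (hK : IsCompact K)
    (hspan : ∀ x ∈ K, ∀ f : E →L[ℝ] ℝ, (∀ j, f (X j) = 0 ∧ f (Y j x) = 0) → f = 0)
    {ψ : E → ℝ} (hψ : ContDiff ℝ ∞ ψ) (hdψ : ∀ x ∈ K, fderiv ℝ ψ x ≠ 0)
    {u v : E → ℝ} (hu : ContDiff ℝ ∞ u) (hv : ContDiff ℝ ∞ v)
    (huK : ∀ x, x ∉ K → u x = 0) (hvK : ∀ x, x ∉ K → v x = 0) (t C0 : ℝ) (hC0 : 0 ≤ C0)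
    (hR : ∀ x, t < ψ x → ∑ j, ((fderiv ℝ u x (X j) - fderiv ℝ v x (Y j x)) ^ 2
      + (fderiv ℝ v x (X j) + fderiv ℝ u x (Y j x)) ^ 2) ≤ C0 * (u x ^ 2 + v x ^ 2)) :
    ∀ x, t < ψ x → u x = 0 ∧ v x = 0 := by
  obtain ⟨C, C', hC, hC', hcar⟩ := carleman_pointwise X Y hY hK hspan
  obtain ⟨s, c, hs, hc, hw⟩ := exists_weight X Y hY hK hspan hψ hdψ C
  set φ : E → ℝ := fun y => Real.exp (s * ψ y) - Real.exp (s * t) with hφdef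
  have hφ : ContDiff ℝ ∞ φ := ((contDiff_const.mul hψ).exp).sub contDiff_const
  set R : E → ℝ := fun x => ∑ j, ((fderiv ℝ u x (X j) - fderiv ℝ v x (Y j x)) ^ 2
      + (fderiv ℝ v x (X j) + fderiv ℝ u x (Y j x)) ^ 2) with hRdef
  have hR0 : ∀ x, 0 ≤ R x := fun x => Finset.sum_nonneg fun j _ => by positivity
  set S : Set E := {x | t < ψ x} with hS
  have hSo : IsOpen S := isOpen_lt continuous_const hψ.continuous
  set h : E → ℝ := fun x => u x ^ 2 + v x ^ 2 with hh
  have hh0 : ∀ x, 0 ≤ h x := fun x => by positivity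
  have hoff : ∀ x, x ∉ K → (u =ᶠ[𝓝 x] fun _ => 0) ∧ (v =ᶠ[𝓝 x] fun _ => 0) := fun x hx =>
    ⟨by filter_upwards [hK.isClosed.isOpen_compl.mem_nhds hx] with y hy using huK y hy,
     by filter_upwards [hK.isClosed.isOpen_compl.mem_nhds hx] with y hy using hvK y hy⟩
  have hRoff : ∀ x, x ∉ K → R x = 0 := fun x hx => by
    simp [hRdef, (hoff x hx).1.fderiv_eq, (hoff x hx).2.fderiv_eq]
  have hφpos : ∀ x, t < ψ x → 0 ≤ φ x := fun x hx => by
    simp only [hφdef, sub_nonneg]; gcongr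
  have hφneg : ∀ x, ¬ t < ψ x → φ x ≤ 0 := fun x hx => by
    simp only [hφdef, sub_nonpos]; gcongr; linarith
  have hRc : Continuous R := by
    have a1 := fun j => (contDiff_fderiv_app hu (contDiff_const (c := X j))).continuous
    have a2 := fun j => (contDiff_fderiv_app hv (contDiff_const (c := X j))).continuous
    have a3 := fun j => (contDiff_fderiv_app hu (hY j)).continuous
    have a4 := fun j => (contDiff_fderiv_app hv (hY j)).continuous
    rw [hRdef]
    fun_prop
  have hRi : Integrable R μ :=
    hRc.integrable_of_hasCompactSupport (HasCompactSupport.intro hK hRoff)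
  have hhc : Continuous h := by
    have := hu.continuous
    have := hv.continuous
    rw [hh]; fun_prop
  have hhi : Integrable h μ := hhc.integrable_of_hasCompactSupport
    (HasCompactSupport.intro hK fun x hx => by simp [hh, huK x hx, hvK x hx])
  have hmain : ∀ l : ℝ, 0 ≤ l → 0 ≤ l * c - C' - 2 * C0 →
      (l * c - C' - 2 * C0) * ∫ x in S, h x ∂μ ≤ 2 * ∫ x, R x ∂μ := by
    intro l hl hlc
    have hwc : ContDiff ℝ ∞ (fun y => Real.exp (l * φ y)) := (contDiff_const.mul hφ).exp
    set U : E → ℝ := fun y => Real.exp (l * φ y) * u y with hU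
    set V : E → ℝ := fun y => Real.exp (l * φ y) * v y with hV
    have hUc : ContDiff ℝ ∞ U := hwc.mul hu
    have hVc : ContDiff ℝ ∞ V := hwc.mul hv
    have dU : ∀ x z, fderiv ℝ U x z =
        Real.exp (l * φ x) * (fderiv ℝ u x z + l * fderiv ℝ φ x z * u x) := fun x z => by
      have := (((hφ.dAt x).hasFDerivAt.const_mul l).exp.mul (hu.dAt x).hasFDerivAt).fderiv
      have e : fderiv ℝ U x = _ := this
      rw [e]; simp; ring
    have dV : ∀ x z, fderiv ℝ V x z =
        Real.exp (l * φ x) * (fderiv ℝ v x z + l * fderiv ℝ φ x z * v x) := fun x z => by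
      have := (((hφ.dAt x).hasFDerivAt.const_mul l).exp.mul (hv.dAt x).hasFDerivAt).fderiv
      have e : fderiv ℝ V x = _ := this
      rw [e]; simp; ring
    set Q : E → E := fun x => ∑ j, Qf (X j) (Y j) φ U V l x with hQ
    have hQc : ContDiff ℝ ∞ Q := ContDiff.sum fun j _ => Qf_contDiff (X j) (hY j) hφ hUc hVc l
    have hQoff : ∀ x, x ∉ K → Q x = 0 := fun x hx => by
      simp [hQ, Qf, hU, hV, huK x hx, hvK x hx]
    have hQs : HasCompactSupport Q := HasCompactSupport.intro hK hQoff
    have hQd : ∀ x, dvg Q x = ∑ j, dvg (Qf (X j) (Y j) φ U V l) x := fun x =>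
      dvg_sum _ fun j _ => (Qf_contDiff (X j) (hY j) hφ hUc hVc l).dAt x
    have hQdoff : ∀ x, x ∉ K → dvg Q x = 0 := fun x hx => by
      have : Q =ᶠ[𝓝 x] fun _ => 0 := by
        filter_upwards [hK.isClosed.isOpen_compl.mem_nhds hx] with y hy using hQoff y hy
      simp [dvg, this.fderiv_eq]
    have hpt : ∀ x, (l * c - C' - 2 * C0) * S.indicator h x ≤ 2 * R x + dvg Q x := by
      intro x
      by_cases hx : x ∈ K
      swap
      · rw [hRoff x hx, hQdoff x hx]
        have : h x = 0 := by simp [hh, huK x hx, hvK x hx]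
        by_cases hxS : x ∈ S <;> simp [hxS, this]
      have h1 := hcar φ U V l hφ hUc hVc hl x hx
      have h2 := hw (Real.exp (s * t)) x hx
      rw [← hQd x] at h1
      set w := Real.exp (l * φ x) with hwdef
      have hwpos : 0 < w := Real.exp_pos _
      have e1 : ∑ j, ((fderiv ℝ U x (X j) - fderiv ℝ V x (Y j x) - l * (fderiv ℝ φ x (X j) * U x - fderiv ℝ φ x (Y j x) * V x)) ^ 2
          + (fderiv ℝ V x (X j) + fderiv ℝ U x (Y j x) - l * (fderiv ℝ φ x (X j) * V x + fderiv ℝ φ x (Y j x) * U x)) ^ 2)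
          = w ^ 2 * R x := by
        simp only [hRdef, Finset.mul_sum, dU, dV]
        refine Finset.sum_congr rfl fun j _ => ?_
        simp only [hU, hV, ← hwdef]
        ring
      have e2 : U x ^ 2 + V x ^ 2 = w ^ 2 * h x := by simp only [hU, hV, hh, ← hwdef]; ring
      rw [e1, e2] at h1
      have h3 : (l * c - C') * (w ^ 2 * h x) ≤ 2 * (w ^ 2 * R x) + dvg Q x := by
        refine le_trans ?_ h1
        have := hh0 x
        gcongr
      have hw2h : 0 ≤ w ^ 2 * h x := by have := hh0 x; positivity
      by_cases hxS : x ∈ S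
      · rw [Set.indicator_of_mem hxS]
        have hw1 : 1 ≤ w := Real.one_le_exp (mul_nonneg hl (hφpos x hxS))
        have hw2 : 1 ≤ w ^ 2 := one_le_pow₀ hw1
        have h4 : w ^ 2 * R x ≤ C0 * (w ^ 2 * h x) := by
          have := mul_le_mul_of_nonneg_left (hR x hxS) (sq_nonneg w)
          calc _ ≤ _ := this
            _ = _ := by ring
        have h5 : h x ≤ w ^ 2 * h x := le_mul_of_one_le_left (hh0 x) hw2
        have h6 := mul_le_mul_of_nonneg_left h5 hlc
        have := hR0 x
        nlinarith
      · rw [Set.indicator_of_notMem hxS]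
        have hw1 : w ≤ 1 := Real.exp_le_one_iff.2 (mul_nonpos_of_nonneg_of_nonpos hl (hφneg x hxS))
        have hw2 : w ^ 2 ≤ 1 := pow_le_one₀ hwpos.le hw1
        have h5 : w ^ 2 * R x ≤ R x := mul_le_of_le_one_left (hR0 x) hw2
        have h6 : 0 ≤ (l * c - C') * (w ^ 2 * h x) := mul_nonneg (by linarith) hw2h
        linarith
    have hQi : Integrable (dvg Q) μ := (dvg_continuous hQc).integrable_of_hasCompactSupport
      (HasCompactSupport.intro hK hQdoff)
    have hI := integral_mono ((hhi.indicator hSo.measurableSet).const_mul _)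
      ((hRi.const_mul 2).add hQi) hpt
    have e : ∫ x, (2 * R x + dvg Q x) ∂μ = 2 * ∫ x, R x ∂μ := by
      rw [integral_add (hRi.const_mul 2) hQi, integral_dvg μ hQc hQs, integral_const_mul, add_zero]
    have e' : ∫ x, (l * c - C' - 2 * C0) * S.indicator h x ∂μ
        = (l * c - C' - 2 * C0) * ∫ x in S, h x ∂μ := by
      rw [integral_const_mul, integral_indicator hSo.measurableSet]
    rw [← e, ← e']
    exact hI
  have hI0 : 0 ≤ ∫ x in S, h x ∂μ := integral_nonneg hh0
  have hzero : ∫ x in S, h x ∂μ = 0 := by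
    by_contra hne
    have hpos : 0 < ∫ x in S, h x ∂μ := lt_of_le_of_ne hI0 (Ne.symm hne)
    set I := ∫ x in S, h x ∂μ with hIdef
    set M := ∫ x, R x ∂μ with hM
    have hM0 : 0 ≤ M := integral_nonneg hR0
    have := hmain ((2 * C0 + C' + (2 * M + 1) / I) / c) (by positivity) (by
      rw [div_mul_cancel₀ _ hc.ne']
      have : 0 ≤ (2 * M + 1) / I := by positivity
      linarith)
    rw [div_mul_cancel₀ _ hc.ne'] at this
    have e : (2 * C0 + C' + (2 * M + 1) / I - C' - 2 * C0) * I = 2 * M + 1 := by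
      field_simp; ring
    linarith
  have hae := (setIntegral_eq_zero_iff_of_nonneg_ae (ae_of_all _ hh0) hhi.integrableOn).1 hzero
  have hEq := Measure.eqOn_open_of_ae_eq hae hSo hhc.continuousOn continuousOn_const
  intro x hx
  have hx0 : u x ^ 2 + v x ^ 2 = 0 := hEq hx
  have h1 := sq_nonneg (u x)
  have h2 := sq_nonneg (v x)
  exact ⟨pow_eq_zero_iff (two_ne_zero) |>.1 (by linarith),
    pow_eq_zero_iff (two_ne_zero) |>.1 (by linarith)⟩
end UC


section Geometry

/-- The vectors `e, J e, f, J f` span when `f` is not in the span of `e, J e`. -/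
lemma exists_frame (J0 : ℂ × ℂ →L[ℝ] ℂ × ℂ) (hJ : ∀ X, J0 (J0 X) = -X) :
    ∃ e f : ℂ × ℂ, ∀ l : ℂ × ℂ →L[ℝ] ℝ, l e = 0 → l (J0 e) = 0 → l f = 0 → l (J0 f) = 0 → l = 0 := by
  have hfr : Module.finrank ℝ (ℂ × ℂ) = 4 := by simp
  have hlt : Submodule.span ℝ ({((1 : ℂ), (0 : ℂ)), J0 (1, 0)} : Set (ℂ × ℂ)) ≠ ⊤ := by
    intro h
    have h1 := finrank_span_finset_le_card (R := ℝ) ({((1 : ℂ), (0 : ℂ)), J0 (1, 0)} : Finset (ℂ × ℂ))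
    rw [Finset.coe_pair, Set.finrank, h, finrank_top, hfr] at h1
    have := Finset.card_le_two (a := ((1 : ℂ), (0 : ℂ))) (b := J0 (1, 0))
    omega
  obtain ⟨f, hf⟩ : ∃ f, f ∉ Submodule.span ℝ ({((1 : ℂ), (0 : ℂ)), J0 (1, 0)} : Set (ℂ × ℂ)) := by
    by_contra! h
    exact hlt (Submodule.eq_top_iff'.2 h)
  set e : ℂ × ℂ := (1, 0) with he
  have he0 : e ≠ 0 := by simp [he, Prod.ext_iff]
  refine ⟨e, f, ?_⟩
  have hli : LinearIndependent ℝ ![e, J0 e, f, J0 f] := by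
    rw [Fintype.linearIndependent_iff]
    intro g hg
    simp only [Fin.sum_univ_four, Matrix.cons_val_zero, Matrix.cons_val_one,
      Matrix.cons_val] at hg
    have hg' : g 0 • J0 e - g 1 • e + g 2 • J0 f - g 3 • f = 0 := by
      have := congrArg J0 hg
      simp only [map_add, map_smul, hJ, map_zero] at this
      rw [← this]; module
    have h23 : g 2 ^ 2 + g 3 ^ 2 = 0 := by
      by_contra hne
      apply hf
      have h3 : (g 2 ^ 2 + g 3 ^ 2) • f
          = (-(g 2 * g 0 + g 3 * g 1)) • e + (g 3 * g 0 - g 2 * g 1) • J0 e := by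
        have : g 2 • (g 0 • e + g 1 • J0 e + g 2 • f + g 3 • J0 f)
          - g 3 • (g 0 • J0 e - g 1 • e + g 2 • J0 f - g 3 • f) = 0 := by rw [hg, hg']; simp
        rw [← sub_eq_zero, ← this]
        module
      have h4 : (g 2 ^ 2 + g 3 ^ 2) • f ∈ Submodule.span ℝ ({e, J0 e} : Set (ℂ × ℂ)) := by
        rw [h3]
        exact Submodule.mem_span_pair.2 ⟨_, _, rfl⟩
      exact (Submodule.smul_mem_iff _ hne).1 h4
    have g2 : g 2 = 0 := by nlinarith [sq_nonneg (g 2), sq_nonneg (g 3)]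
    have g3 : g 3 = 0 := by nlinarith [sq_nonneg (g 2), sq_nonneg (g 3)]
    simp only [g2, g3, zero_smul, add_zero, sub_zero] at hg hg'
    have h01 : g 0 ^ 2 + g 1 ^ 2 = 0 := by
      by_contra hne
      have : (g 0 ^ 2 + g 1 ^ 2) • e = 0 := by
        have : g 0 • (g 0 • e + g 1 • J0 e) - g 1 • (g 0 • J0 e - g 1 • e) = 0 := by
          rw [hg, hg']; simp
        rw [← this]; module
      exact he0 ((smul_eq_zero.1 this).resolve_left hne)
    have g0 : g 0 = 0 := by nlinarith [sq_nonneg (g 0), sq_nonneg (g 1)]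
    have g1 : g 1 = 0 := by nlinarith [sq_nonneg (g 0), sq_nonneg (g 1)]
    intro i
    fin_cases i
    · exact g0
    · exact g1
    · exact g2
    · exact g3
  have hsp := hli.span_eq_top_of_card_eq_finrank (by rw [hfr]; rfl)
  intro l h0 h1 h2 h3
  have hle : Submodule.span ℝ (Set.range ![e, J0 e, f, J0 f]) ≤ LinearMap.ker (l : ℂ × ℂ →ₗ[ℝ] ℝ) := by
    rw [Submodule.span_le]
    rintro _ ⟨i, rfl⟩
    fin_cases i
    · exact h0
    · exact h1
    · exact h2
    · exact h3
  refine ContinuousLinearMap.ext fun x => ?_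
  have hx : x ∈ Submodule.span ℝ (Set.range ![e, J0 e, f, J0 f]) := hsp ▸ Submodule.mem_top
  exact hle hx

abbrev V2 := ℂ × ℂ
abbrev F2 := V2 →L[ℝ] V2 →L[ℝ] ℝ

/-- derivative of `y ↦ α y (Z y) (W y)`. -/
lemma fderiv_pair {α : V2 → F2} {Z W : V2 → V2} {x : V2} (hα : DifferentiableAt ℝ α x)
    (hZ : DifferentiableAt ℝ Z x) (hW : DifferentiableAt ℝ W x) (w : V2) :
    fderiv ℝ (fun y => α y (Z y) (W y)) x w =
      fderiv ℝ α x w (Z x) (W x) + α x (fderiv ℝ Z x w) (W x) + α x (Z x) (fderiv ℝ W x w) := by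
  have h := ((hα.hasFDerivAt.clm_apply hZ.hasFDerivAt).clm_apply hW.hasFDerivAt).fderiv
  rw [h]
  simp
  ring

lemma fderiv_Jc {J : V2 → (V2 →L[ℝ] V2)} {x : V2} (hJ : DifferentiableAt ℝ J x) (e w : V2) :
    fderiv ℝ (fun y => J y e) x w = fderiv ℝ J x w e := by
  have h := (hJ.hasFDerivAt.clm_apply (hasFDerivAt_const e x)).fderiv
  rw [h]; simp

lemma cr_equations {J : V2 → (V2 →L[ℝ] V2)} {α : V2 → F2} {O : Set V2} (hO : IsOpen O)
    (hJ : ∀ x ∈ O, DifferentiableAt ℝ J x) (hα : ∀ x ∈ O, DifferentiableAt ℝ α x)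
    (hJ2 : ∀ x ∈ O, ∀ X, J x (J x X) = -X) (halt : ∀ x ∈ O, ∀ X, α x X X = 0)
    (hanti : ∀ x ∈ O, ∀ X Y, α x (J x X) (J x Y) = -α x X Y)
    (hcl : ∀ x ∈ O, ∀ X Y Z : V2,
      fderiv ℝ α x X Y Z - fderiv ℝ α x Y X Z + fderiv ℝ α x Z X Y = 0)
    (e f : V2) (x : V2) (hx : x ∈ O) :
    fderiv ℝ (fun y => α y (J y e) f) x e - fderiv ℝ (fun y => α y e f) x (J x e)
      = α x (fderiv ℝ J x e e) f + α x e (fderiv ℝ J x f e) ∧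
    fderiv ℝ (fun y => α y e f) x e + fderiv ℝ (fun y => α y (J y e) f) x (J x e)
      = - α x (fderiv ℝ J x e e) (J x f) - α x (J x e) (fderiv ℝ J x e f)
        + α x e (fderiv ℝ J x (J x e) f) - α x e (fderiv ℝ J x (J x f) e) := by
  have hskew : ∀ y ∈ O, ∀ X Y, α y X Y = - α y Y X := fun y hy X Y => by
    have := halt y hy (X + Y)
    simp only [map_add, add_apply, halt y hy] at this
    linarith
  have hsw : ∀ y ∈ O, ∀ X Y, α y X (J y Y) = α y (J y X) Y := fun y hy X Y => by
    have := hanti y hy X (J y Y)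
    rw [hJ2 y hy, map_neg] at this
    linarith
  have hself : ∀ y ∈ O, α y e (J y e) = 0 := fun y hy => by
    have h1 := hsw y hy e e
    have h2 := hskew y hy (J y e) e
    linarith
  have hα' := hα x hx
  have hJ' := hJ x hx
  have dJ : ∀ c : V2, DifferentiableAt ℝ (fun y => J y c) x := fun c =>
    hJ'.clm_apply (differentiableAt_const c)
  have dc : ∀ c : V2, DifferentiableAt ℝ (fun _ : V2 => c) x := fun c => differentiableAt_const c
  have hev : ∀ {g h : V2 → ℝ}, (∀ y ∈ O, g y = h y) → fderiv ℝ g x = fderiv ℝ h x := by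
    intro g h hgh
    apply Filter.EventuallyEq.fderiv_eq
    filter_upwards [hO.mem_nhds hx] with y hy using hgh y hy
  have eq0 : ∀ w, fderiv ℝ α x w e (J x e) + α x e (fderiv ℝ J x w e) = 0 := fun w => by
    have h1 := fderiv_pair hα' (dc e) (dJ e) w
    rw [hev (h := fun _ => 0) hself, fderiv_Jc hJ'] at h1
    simp at h1
    linarith
  have eq1 : ∀ w, fderiv ℝ (fun y => α y (J y e) f) x w
      = fderiv ℝ α x w (J x e) f + α x (fderiv ℝ J x w e) f := fun w => by
    have h1 := fderiv_pair hα' (dJ e) (dc f) w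
    rw [fderiv_Jc hJ'] at h1
    rw [h1]; simp
  have eq2 : ∀ w, fderiv ℝ (fun y => α y e f) x w = fderiv ℝ α x w e f := fun w => by
    have h1 := fderiv_pair hα' (dc e) (dc f) w
    rw [h1]; simp
  have eq3 : ∀ w, fderiv ℝ α x w (J x e) (J x f) + α x (fderiv ℝ J x w e) (J x f)
      + α x (J x e) (fderiv ℝ J x w f) = - fderiv ℝ (fun y => α y e f) x w := fun w => by
    have h1 := fderiv_pair hα' (dJ e) (dJ f) w
    rw [fderiv_Jc hJ', fderiv_Jc hJ', hev (h := fun y => - α y e f) (fun y hy => hanti y hy e f)] at h1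
    rw [← h1, fderiv_fun_neg]; simp
  have eq4 : ∀ w, fderiv ℝ α x w e (J x f) + α x e (fderiv ℝ J x w f)
      = fderiv ℝ (fun y => α y (J y e) f) x w := fun w => by
    have h1 := fderiv_pair hα' (dc e) (dJ f) w
    rw [fderiv_Jc hJ', hev (h := fun y => α y (J y e) f) (fun y hy => hsw y hy e f)] at h1
    rw [h1]; simp
  have c1 := hcl x hx e (J x e) f
  have c2 := hcl x hx e (J x e) (J x f)
  constructor
  · rw [eq1, eq2]
    linarith [eq0 f]
  · linarith [eq3 e, eq4 (J x e), eq0 (J x f)]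

lemma cr_bound {J : V2 → (V2 →L[ℝ] V2)} {α : V2 → F2} {O : Set V2} (hO : IsOpen O)
    (hJ : ∀ x ∈ O, DifferentiableAt ℝ J x) (hα : ∀ x ∈ O, DifferentiableAt ℝ α x)
    (hJ2 : ∀ x ∈ O, ∀ X, J x (J x X) = -X) (halt : ∀ x ∈ O, ∀ X, α x X X = 0)
    (hanti : ∀ x ∈ O, ∀ X Y, α x (J x X) (J x Y) = -α x X Y)
    (hcl : ∀ x ∈ O, ∀ X Y Z : V2,
      fderiv ℝ α x X Y Z - fderiv ℝ α x Y X Z + fderiv ℝ α x Z X Y = 0)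
    (e f : V2) (x : V2) (hx : x ∈ O) (k G : ℝ) (hk : 0 ≤ k) (h1 : ‖α x e‖ ≤ k) (h2 : ‖α x f‖ ≤ k)
    (h3 : ‖α x (J x e)‖ ≤ k) (h4 : ‖α x (J x f)‖ ≤ k)
    (hG : ‖fderiv ℝ J x e e‖ + ‖fderiv ℝ J x f e‖ + ‖fderiv ℝ J x e f‖
      + ‖fderiv ℝ J x (J x e) f‖ + ‖fderiv ℝ J x (J x f) e‖ ≤ G) :
    |fderiv ℝ (fun y => α y (J y e) f) x e - fderiv ℝ (fun y => α y e f) x (J x e)| ≤ 4 * k * G ∧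
    |fderiv ℝ (fun y => α y e f) x e + fderiv ℝ (fun y => α y (J y e) f) x (J x e)| ≤ 4 * k * G := by
  have hskew : ∀ X Y, α x X Y = - α x Y X := fun X Y => by
    have := halt x hx (X + Y)
    simp only [map_add, add_apply, halt x hx] at this
    linarith
  have hb : ∀ b w : V2, ‖α x b‖ ≤ k → |α x b w| ≤ k * ‖w‖ := fun b w hb =>
    ((α x b).le_opNorm w).trans (by gcongr)
  have hb' : ∀ b w : V2, ‖α x b‖ ≤ k → |α x w b| ≤ k * ‖w‖ := fun b w h => by
    rw [hskew, abs_neg]; exact hb b w h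
  obtain ⟨e1, e2⟩ := cr_equations hO hJ hα hJ2 halt hanti hcl e f x hx
  rw [e1, e2]
  have n1 := norm_nonneg (fderiv ℝ J x e e)
  have n2 := norm_nonneg (fderiv ℝ J x f e)
  have n3 := norm_nonneg (fderiv ℝ J x e f)
  have n4 := norm_nonneg (fderiv ℝ J x (J x e) f)
  have n5 := norm_nonneg (fderiv ℝ J x (J x f) e)
  have a1 := abs_le.1 (hb' f (fderiv ℝ J x e e) h2)
  have a2 := abs_le.1 (hb e (fderiv ℝ J x f e) h1)
  have a3 := abs_le.1 (hb' (J x f) (fderiv ℝ J x e e) h4)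
  have a4 := abs_le.1 (hb (J x e) (fderiv ℝ J x e f) h3)
  have a5 := abs_le.1 (hb e (fderiv ℝ J x (J x e) f) h1)
  have a6 := abs_le.1 (hb e (fderiv ℝ J x (J x f) e) h1)
  have hkG := mul_le_mul_of_nonneg_left hG hk
  have m1 := mul_nonneg hk n1
  have m2 := mul_nonneg hk n2
  have m3 := mul_nonneg hk n3
  have m4 := mul_nonneg hk n4
  have m5 := mul_nonneg hk n5
  constructor <;> rw [abs_le] <;> constructor <;> nlinarith
end Geometry


section Final

lemma fderiv_bound {E : Type*} [NormedAddCommGroup E] [NormedSpace ℝ E]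
    {J : E → (E →L[ℝ] E)} (hJ : ContDiff ℝ ∞ J) {K : Set E} (hK : IsCompact K) :
    ∃ G : ℝ, ∀ y ∈ K, ∀ a b : E, ‖fderiv ℝ J y a b‖ ≤ G * ‖a‖ * ‖b‖ := by
  have hd : Continuous (fderiv ℝ J) := hJ.continuous_fderiv (by simp)
  obtain ⟨G, hG⟩ := hK.exists_bound_of_continuousOn (f := fderiv ℝ J) hd.continuousOn
  refine ⟨G, fun y hy a b => ((fderiv ℝ J y).le_opNorm₂ a b).trans ?_⟩
  have := hG y hy
  gcongr

set_option maxHeartbeats 2000000 in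
lemma local_uc {J : V2 → (V2 →L[ℝ] V2)} {α : V2 → F2} (hJ : ContDiff ℝ ∞ J) (hα : ContDiff ℝ ∞ α)
    (x0 : V2) {ρ : ℝ} (hρ : 0 < ρ)
    (hJ2 : ∀ x ∈ Metric.ball x0 ρ, ∀ X, J x (J x X) = -X)
    (halt : ∀ x ∈ Metric.ball x0 ρ, ∀ X, α x X X = 0)
    (hanti : ∀ x ∈ Metric.ball x0 ρ, ∀ X Y, α x (J x X) (J x Y) = -α x X Y)
    (hcl : ∀ x ∈ Metric.ball x0 ρ, ∀ X Y Z : V2,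
      fderiv ℝ α x X Y Z - fderiv ℝ α x Y X Z + fderiv ℝ α x Z X Y = 0) :
    ∃ R > 0, ∀ z ∈ Metric.ball x0 R, (∀ᶠ y in 𝓝 z, α y = 0) → ∀ᶠ y in 𝓝 x0, α y = 0 := by
  obtain ⟨e, f, hef⟩ := exists_frame (J x0) (hJ2 x0 (Metric.mem_ball_self hρ))
  have hYc : ∀ c : V2, ContDiff ℝ ∞ fun y => J y c := fun c => hJ.clm_apply contDiff_const
  set X : Fin 2 → V2 := ![e, f] with hX
  set Y : Fin 2 → V2 → V2 := fun j y => J y (X j) with hYdef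
  have hY : ∀ j, ContDiff ℝ ∞ (Y j) := fun j => hYc (X j)
  -- spanning at x0 and nearby
  have hsp0 : ∀ x ∈ ({x0} : Set V2), ∀ l : V2 →L[ℝ] ℝ, (∀ j, l (X j) = 0 ∧ l (Y j x) = 0) → l = 0 := by
    intro x hx l hl
    rw [Set.mem_singleton_iff] at hx
    subst hx
    exact hef l (hl 0).1 (hl 0).2 (hl 1).1 (hl 1).2
  obtain ⟨C, hC, hCb⟩ := exists_norm_bound X Y (fun j => (hY j).continuous) isCompact_singleton hsp0
  have hnear : ∀ᶠ x in 𝓝 x0, C * ∑ j, ‖Y j x0 - Y j x‖ < 1 := by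
    have hc : Continuous fun x => C * ∑ j, ‖Y j x0 - Y j x‖ := by
      have := fun j => (hY j).continuous
      fun_prop
    have : C * ∑ j, ‖Y j x0 - Y j x0‖ < 1 := by simp
    exact hc.continuousAt.eventually_lt continuousAt_const this
  obtain ⟨ρ', hρ', hρ'b⟩ := Metric.eventually_nhds_iff_ball.1 hnear
  set r := min ρ ρ' / 2 with hr
  have hrpos : 0 < r := by positivity
  have hrρ : Metric.closedBall x0 r ⊆ Metric.ball x0 ρ := Metric.closedBall_subset_ball (by
    have := min_le_left ρ ρ'; linarith)
  have hrρ' : Metric.closedBall x0 r ⊆ Metric.ball x0 ρ' := Metric.closedBall_subset_ball (by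
    have := min_le_right ρ ρ'; linarith)
  have hspan : ∀ x ∈ Metric.closedBall x0 r, ∀ l : V2 →L[ℝ] ℝ,
      (∀ j, l (X j) = 0 ∧ l (Y j x) = 0) → l = 0 := by
    intro x hx l hl
    by_contra hne
    have hn : 0 < ‖l‖ := norm_pos_iff.2 hne
    have h1 := hCb x0 rfl l
    have h2 : ∑ j, (|l (X j)| + |l (Y j x0)|) ≤ ‖l‖ * ∑ j, ‖Y j x0 - Y j x‖ := by
      rw [Finset.mul_sum]
      refine Finset.sum_le_sum fun j _ => ?_
      rw [(hl j).1, abs_zero, zero_add]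
      have : l (Y j x0) = l (Y j x0 - Y j x) := by rw [map_sub, (hl j).2, sub_zero]
      rw [this]
      exact l.le_opNorm _
    have h3 := hρ'b x (hrρ' hx)
    have h4 := mul_le_mul_of_nonneg_left h2 hC
    nlinarith
  obtain ⟨C1, hC1, hC1b⟩ := exists_norm_bound X Y (fun j => (hY j).continuous)
    (isCompact_closedBall x0 r) hspan
  set p : V2 → ℝ := fun y => α y e f with hp
  set q : V2 → ℝ := fun y => α y (J y e) f with hq
  have hpc : ContDiff ℝ ∞ p := (hα.clm_apply contDiff_const).clm_apply contDiff_const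
  have hqc : ContDiff ℝ ∞ q := (hα.clm_apply (hYc e)).clm_apply contDiff_const
  have hskew : ∀ y ∈ Metric.ball x0 ρ, ∀ X Y, α y X Y = - α y Y X := fun y hy X Y => by
    have := halt y hy (X + Y)
    simp only [map_add, add_apply, halt y hy] at this
    linarith
  have hsw : ∀ y ∈ Metric.ball x0 ρ, ∀ X Y, α y X (J y Y) = α y (J y X) Y := fun y hy X Y => by
    have := hanti y hy X (J y Y)
    rw [hJ2 y hy, map_neg] at this
    linarith
  have hself : ∀ y ∈ Metric.ball x0 ρ, ∀ c, α y c (J y c) = 0 ∧ α y (J y c) c = 0 := fun y hy c => by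
    have h1 := hsw y hy c c
    have h2 := hskew y hy (J y c) c
    constructor <;> linarith
  have hqf : ∀ y ∈ Metric.ball x0 ρ, α y (J y f) e = - q y := fun y hy => by
    rw [hskew y hy, hsw y hy e f]
  -- bounds for the rows of `α`
  have hrow : ∀ y ∈ Metric.closedBall x0 r, ‖α y e‖ ≤ C1 * (|p y| + |q y|) ∧
      ‖α y f‖ ≤ C1 * (|p y| + |q y|) ∧ ‖α y (J y e)‖ ≤ C1 * (|p y| + |q y|) ∧
      ‖α y (J y f)‖ ≤ C1 * (|p y| + |q y|) := by
    intro y hy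
    have hy' := hrρ hy
    have s1 := hself y hy' e
    have s2 := hself y hy' f
    have a1 : α y f e = - p y := hskew y hy' f e
    have a2 : α y e (J y f) = q y := hsw y hy' e f
    have a3 : α y f (J y e) = - q y := hskew y hy' f (J y e)
    have b1 := hC1b y hy (α y e)
    have b2 := hC1b y hy (α y f)
    have b3 := hC1b y hy (α y (J y e))
    have b4 := hC1b y hy (α y (J y f))
    have c3 : α y (J y e) f = q y := rfl
    have c1 : α y e f = p y := rfl
    have c4 := hqf y hy'
    simp only [Fin.sum_univ_two, hX, hYdef, Matrix.cons_val_zero, Matrix.cons_val_one,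
      halt y hy', hanti y hy', s1.1, s1.2, s2.1, s2.2, a1, a2, a3, c3, c1, c4, abs_zero, abs_neg,
      zero_add, add_zero, neg_zero, neg_neg] at b1 b2 b3 b4
    refine ⟨b1, b2, ?_, ?_⟩
    · rwa [add_comm] at b3
    · rwa [add_comm] at b4
  have hzero : ∀ y ∈ Metric.closedBall x0 r, p y = 0 → q y = 0 → α y = 0 := by
    intro y hy h1 h2
    obtain ⟨b1, b2, b3, b4⟩ := hrow y hy
    simp only [h1, h2, abs_zero, add_zero, mul_zero, norm_le_zero_iff] at b1 b2 b3 b4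
    refine ContinuousLinearMap.ext fun w => ?_
    refine hspan y hy (α y w) fun j => ?_
    rw [hskew y (hrρ hy) w (X j), hskew y (hrρ hy) w (Y j y)]
    fin_cases j
    · simp [hX, hYdef, b1, b3]
    · simp [hX, hYdef, b2, b4]
  -- bound for derivative of `J`
  obtain ⟨G, hG⟩ : ∃ G : ℝ, ∀ y ∈ Metric.closedBall x0 r, ∀ a ∈ ({e, f} : Set V2),
      ∀ b ∈ ({e, f} : Set V2), ‖fderiv ℝ J y a a‖ + ‖fderiv ℝ J y b a‖ + ‖fderiv ℝ J y a b‖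
      + ‖fderiv ℝ J y (J y a) b‖ + ‖fderiv ℝ J y (J y b) a‖ ≤ G := by
    have hJc := hJ.continuous
    obtain ⟨G1, hG1⟩ := fderiv_bound hJ (isCompact_closedBall x0 r)
    obtain ⟨G2, hG2⟩ := (isCompact_closedBall x0 r).exists_bound_of_continuousOn hJc.continuousOn
    set m := ‖e‖ + ‖f‖ with hm
    have hm0 : 0 ≤ m := by positivity
    refine ⟨|G1| * m * m + |G1| * m * m + |G1| * m * m + |G1| * (|G2| * m) * m
      + |G1| * (|G2| * m) * m, ?_⟩
    intro y hy a ha b hb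
    have hbd : ∀ c ∈ ({e, f} : Set V2), ‖c‖ ≤ m := by
      rintro c (rfl | rfl)
      · simp [hm]
      · simp [hm]
    have g2 : ‖J y‖ ≤ |G2| := (hG2 y hy).trans (le_abs_self _)
    have g3 : ∀ c ∈ ({e, f} : Set V2), ‖J y c‖ ≤ |G2| * m := fun c hc =>
      ((J y).le_opNorm c).trans (by gcongr; exact hbd c hc)
    have g4 : ∀ (c d : V2) (n1 : ℝ), ‖c‖ ≤ n1 → ‖d‖ ≤ m → ‖fderiv ℝ J y c d‖ ≤ |G1| * n1 * m := by
      intro c d n1 h1 h2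
      have h0 : 0 ≤ n1 := (norm_nonneg _).trans h1
      exact (hG1 y hy c d).trans (by gcongr; exact le_abs_self _)
    have := g4 a a m (hbd a ha) (hbd a ha)
    have := g4 b a m (hbd b hb) (hbd a ha)
    have := g4 a b m (hbd a ha) (hbd b hb)
    have := g4 (J y a) b _ (g3 a ha) (hbd b hb)
    have := g4 (J y b) a _ (g3 b hb) (hbd a ha)
    linarith
  have hCR : ∀ y ∈ Metric.closedBall x0 r,
      |fderiv ℝ q y e - fderiv ℝ p y (J y e)| ≤ 4 * (C1 * (|p y| + |q y|)) * G ∧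
      |fderiv ℝ p y e + fderiv ℝ q y (J y e)| ≤ 4 * (C1 * (|p y| + |q y|)) * G ∧
      |fderiv ℝ q y f - fderiv ℝ p y (J y f)| ≤ 4 * (C1 * (|p y| + |q y|)) * G ∧
      |fderiv ℝ p y f + fderiv ℝ q y (J y f)| ≤ 4 * (C1 * (|p y| + |q y|)) * G := by
    intro y hy
    obtain ⟨b1, b2, b3, b4⟩ := hrow y hy
    have hk : 0 ≤ C1 * (|p y| + |q y|) := by positivity
    have k1 := cr_bound Metric.isOpen_ball (fun x _ => hJ.dAt x) (fun x _ => hα.dAt x) hJ2 halt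
      hanti hcl e f y (hrρ hy) _ G hk b1 b2 b3 b4 (hG y hy e (by simp) f (by simp))
    have k2 := cr_bound Metric.isOpen_ball (fun x _ => hJ.dAt x) (fun x _ => hα.dAt x) hJ2 halt
      hanti hcl f e y (hrρ hy) _ G hk b2 b1 b4 b3 (hG y hy f (by simp) e (by simp))
    have e1 : fderiv ℝ (fun y => α y f e) y = - fderiv ℝ p y := by
      rw [← fderiv_neg]
      apply Filter.EventuallyEq.fderiv_eq
      filter_upwards [Metric.isOpen_ball.mem_nhds (hrρ hy)] with w hw using hskew w hw f e
    have e2 : fderiv ℝ (fun y => α y (J y f) e) y = - fderiv ℝ q y := by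
      rw [← fderiv_neg]
      apply Filter.EventuallyEq.fderiv_eq
      filter_upwards [Metric.isOpen_ball.mem_nhds (hrρ hy)] with w hw using hqf w hw
    rw [e1, e2] at k2
    simp only [neg_apply] at k2
    refine ⟨k1.1, k1.2, ?_, ?_⟩
    · rw [← abs_neg]; convert k2.1 using 2; ring
    · rw [← abs_neg]; convert k2.2 using 2; ring
  refine ⟨r / 3, by positivity, fun z hz hzα => ?_⟩
  set R := r / 3 with hR
  have hRpos : 0 < R := by positivity
  set N : V2 → ℝ := fun y => ‖y.1 - z.1‖ ^ 2 + ‖y.2 - z.2‖ ^ 2 with hN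
  have hNc : ContDiff ℝ ∞ N :=
    ((contDiff_fst.sub contDiff_const).norm_sq ℝ).add ((contDiff_snd.sub contDiff_const).norm_sq ℝ)
  have hN1 : ∀ y, ‖y - z‖ ^ 2 ≤ N y := fun y => by
    rw [Prod.norm_def]
    rcases max_choice ‖(y - z).1‖ ‖(y - z).2‖ with h | h <;> rw [h] <;> simp [hN]
  have hN2 : ∀ y, N y ≤ 2 * ‖y - z‖ ^ 2 := fun y => by
    have h1 : ‖y.1 - z.1‖ ≤ ‖y - z‖ := norm_fst_le (y - z)
    have h2 : ‖y.2 - z.2‖ ≤ ‖y - z‖ := norm_snd_le (y - z)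
    have h3 : ‖y.1 - z.1‖ ^ 2 ≤ ‖y - z‖ ^ 2 := by gcongr
    have h4 : ‖y.2 - z.2‖ ^ 2 ≤ ‖y - z‖ ^ 2 := by gcongr
    simp only [hN]; linarith
  have hNd : ∀ y, fderiv ℝ N y (y - z) = 2 * N y := fun y => by
    have h1 : HasFDerivAt (fun w : V2 => w.1 - z.1) (ContinuousLinearMap.fst ℝ ℂ ℂ) y :=
      hasFDerivAt_fst.sub_const _
    have h2 : HasFDerivAt (fun w : V2 => w.2 - z.2) (ContinuousLinearMap.snd ℝ ℂ ℂ) y :=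
      hasFDerivAt_snd.sub_const _
    have h3 : fderiv ℝ N y = _ := (h1.norm_sq.add h2.norm_sq).fderiv
    rw [h3]
    have i1 := real_inner_self_eq_norm_sq (y.1 - z.1)
    have i2 := real_inner_self_eq_norm_sq (y.2 - z.2)
    rw [inner_sub_left] at i1 i2
    simp [hN, -Complex.inner]
    linarith
  have hsub : ∀ y, N y ≤ 4 * R ^ 2 → y ∈ Metric.closedBall x0 r := fun y hy => by
    have h1 : ‖y - z‖ ≤ 2 * R := by
      have := hN1 y
      nlinarith [norm_nonneg (y - z)]
    have h2 : dist z x0 < R := hz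
    rw [Metric.mem_closedBall]
    have h3 := dist_triangle y z x0
    rw [dist_eq_norm y z] at h3
    have : r = 3 * R := by rw [hR]; ring
    linarith
  obtain ⟨r0, hr0, hr0b⟩ := Metric.eventually_nhds_iff_ball.1 hzα
  have hvan : ∀ y, N y < r0 ^ 2 → α y = 0 := fun y hy => hr0b y (by
    rw [Metric.mem_ball, dist_eq_norm]
    have := hN1 y
    exact lt_of_pow_lt_pow_left₀ 2 hr0.le (by linarith))
  set K : Set V2 := {y | r0 ^ 2 ≤ N y ∧ N y ≤ 4 * R ^ 2} with hKdef
  have hKc : IsCompact K := by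
    apply (isCompact_closedBall x0 r).of_isClosed_subset
    · exact (isClosed_le continuous_const hNc.continuous).inter
        (isClosed_le hNc.continuous continuous_const)
    · exact fun y hy => hsub y hy.2
  set χ : V2 → ℝ := fun y => Real.smoothTransition ((4 * R ^ 2 - N y) / (2 * R ^ 2)) with hχ
  have hχc : ContDiff ℝ ∞ χ :=
    (Real.smoothTransition.contDiff (n := ⊤)).comp ((contDiff_const.sub hNc).div_const _)
  have hχ1 : ∀ y, N y ≤ 2 * R ^ 2 → χ y = 1 := fun y hy =>
    Real.smoothTransition.one_of_one_le (by rw [le_div_iff₀ (by positivity)]; linarith)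
  have hχ0 : ∀ y, 4 * R ^ 2 < N y → χ y = 0 := fun y hy =>
    Real.smoothTransition.zero_of_nonpos
      (div_nonpos_of_nonpos_of_nonneg (by linarith) (by positivity))
  have hloc : ∀ y, N y < 2 * R ^ 2 → (∀ᶠ w in 𝓝 y, χ w = 1) := fun y hy => by
    filter_upwards [(isOpen_lt hNc.continuous continuous_const).mem_nhds hy] with w hw
      using hχ1 w (le_of_lt hw)
  have key := uc_abstract (Measure.addHaar : Measure V2) X Y hY hKc (fun x hx => hspan x (hsub x hx.2))
    (ψ := fun y => - N y) hNc.neg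
    (by
      intro x hx h
      have h1 := hNd x
      rw [fderiv_fun_neg, neg_eq_zero] at h
      rw [h] at h1
      have h2 := hx.1
      have h3 : 0 < r0 ^ 2 := by positivity
      simp at h1
      linarith)
    (u := fun y => χ y * p y) (v := fun y => - (χ y * q y)) (hχc.mul hpc) (hχc.mul hqc).neg
    (by
      intro x hx
      by_cases h : N x < r0 ^ 2
      · simp [hp, hvan x h]
      · have : 4 * R ^ 2 < N x := by
          by_contra h'
          exact hx ⟨not_lt.1 h, not_lt.1 h'⟩
        simp [hχ0 x this])
    (by
      intro x hx
      by_cases h : N x < r0 ^ 2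
      · simp [hq, hvan x h]
      · have : 4 * R ^ 2 < N x := by
          by_contra h'
          exact hx ⟨not_lt.1 h, not_lt.1 h'⟩
        simp [hχ0 x this])
    (-(2 * R ^ 2)) (128 * (C1 * G) ^ 2) (by positivity)
    (by
      intro x hx
      have hx' : N x < 2 * R ^ 2 := by linarith
      have hxr : x ∈ Metric.closedBall x0 r := hsub x (by nlinarith [sq_nonneg R])
      have d1 : fderiv ℝ (fun y => χ y * p y) x = fderiv ℝ p x := by
        apply Filter.EventuallyEq.fderiv_eq
        filter_upwards [hloc x hx'] with w hw
        rw [hw, one_mul]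
      have d2 : fderiv ℝ (fun y => - (χ y * q y)) x = - fderiv ℝ q x := by
        rw [← fderiv_neg]
        apply Filter.EventuallyEq.fderiv_eq
        filter_upwards [hloc x hx'] with w hw
        rw [hw, one_mul]; rfl
      have k := hCR x hxr
      rw [d1, d2, hχ1 x hx'.le]
      simp only [Fin.sum_univ_two, hX, hYdef, Matrix.cons_val_zero, Matrix.cons_val_one, neg_apply,
        sub_neg_eq_add, one_mul]
      have hsq : ∀ t : ℝ, |t| ≤ 4 * (C1 * (|p x| + |q x|)) * G →
          t ^ 2 ≤ 32 * (C1 * G) ^ 2 * (p x ^ 2 + (- q x) ^ 2) := by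
        intro t ht
        have h1 : t ^ 2 ≤ (4 * (C1 * (|p x| + |q x|)) * G) ^ 2 := by
          rw [← sq_abs t]; gcongr
        refine h1.trans ?_
        have h2 : (|p x| + |q x|) ^ 2 ≤ 2 * (p x ^ 2 + (- q x) ^ 2) := by
          rw [← sq_abs (p x), ← sq_abs (- q x), abs_neg]
          nlinarith [sq_nonneg (|p x| - |q x|)]
        calc (4 * (C1 * (|p x| + |q x|)) * G) ^ 2 = 16 * (C1 * G) ^ 2 * (|p x| + |q x|) ^ 2 := by ring
          _ ≤ 16 * (C1 * G) ^ 2 * (2 * (p x ^ 2 + (- q x) ^ 2)) := by gcongr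
          _ = _ := by ring
      have t1 := hsq _ k.1
      have t2 := hsq _ k.2.1
      have t3 := hsq _ k.2.2.1
      have t4 := hsq _ k.2.2.2
      nlinarith)
  have hx0 : N x0 < 2 * R ^ 2 := by
    have h2 : dist z x0 < R := hz
    rw [dist_comm, dist_eq_norm] at h2
    have h3 := hN2 x0
    have : ‖x0 - z‖ ^ 2 < R ^ 2 := by gcongr
    linarith
  filter_upwards [(isOpen_lt hNc.continuous continuous_const).mem_nhds hx0] with y hy
  have hy' : N y < 2 * R ^ 2 := hy
  have := key y (by linarith)
  simp only [hχ1 y hy'.le, one_mul, neg_eq_zero] at this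
  exact hzero y (hsub y (by nlinarith [sq_nonneg R])) this.1 this.2

lemma contDiff_cutoff {F : Type*} [NormedAddCommGroup F] [NormedSpace ℝ F] {U : Set V2}
    (hU : IsOpen U) {g : V2 → F} (hg : ContDiffOn ℝ ∞ g U) {x0 : V2} (b : ContDiffBump x0)
    (hb : Metric.closedBall x0 b.rOut ⊆ U) : ContDiff ℝ ∞ fun x => b x • g x := by
  rw [contDiff_iff_contDiffAt]
  intro x
  by_cases hx : x ∈ U
  · exact b.contDiffAt.smul (hg.contDiffAt (hU.mem_nhds hx))
  · have h0 : (fun x => b x • g x) =ᶠ[𝓝 x] fun _ => 0 := by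
      filter_upwards [Metric.isClosed_closedBall.isOpen_compl.mem_nhds (fun h => hx (hb h))] with y hy
      have : b y = 0 := b.zero_of_le_dist (by
        rw [Set.mem_compl_iff, Metric.mem_closedBall, not_le] at hy; exact hy.le)
      rw [this, zero_smul]
    exact contDiffAt_const.congr_of_eventuallyEq h0


lemma local_uc_on {U : Set V2} (hU : IsOpen U) {J : V2 → (V2 →L[ℝ] V2)} {α : V2 → F2}
    (hJ : ContDiffOn ℝ ∞ J U) (hα : ContDiffOn ℝ ∞ α U)
    (hJ2 : ∀ x ∈ U, ∀ X, J x (J x X) = -X)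
    (halt : ∀ x ∈ U, ∀ X, α x X X = 0)
    (hanti : ∀ x ∈ U, ∀ X Y, α x (J x X) (J x Y) = -α x X Y)
    (hcl : ∀ x ∈ U, ∀ X Y Z : V2,
      fderiv ℝ α x X Y Z - fderiv ℝ α x Y X Z + fderiv ℝ α x Z X Y = 0)
    (x0 : V2) (hx0 : x0 ∈ U) :
    ∃ R > 0, ∀ z ∈ Metric.ball x0 R, (∀ᶠ y in 𝓝 z, α y = 0) → ∀ᶠ y in 𝓝 x0, α y = 0 := by
  obtain ⟨ρ, hρ, hρU⟩ := Metric.nhds_basis_closedBall.mem_iff.1 (hU.mem_nhds hx0)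
  let b : ContDiffBump x0 := ⟨ρ / 2, ρ, by positivity, by linarith⟩
  have hb1 : ∀ y ∈ Metric.ball x0 (ρ / 2), b y = 1 := fun y hy =>
    b.one_of_mem_closedBall (Metric.ball_subset_closedBall hy)
  have hsub : Metric.ball x0 (ρ / 2) ⊆ U := fun y hy => hρU (by
    rw [Metric.mem_closedBall]
    rw [Metric.mem_ball] at hy
    linarith)
  have hfd : ∀ x ∈ Metric.ball x0 (ρ / 2), fderiv ℝ (fun y => b y • α y) x = fderiv ℝ α x := by
    intro x hx
    apply Filter.EventuallyEq.fderiv_eq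
    filter_upwards [Metric.isOpen_ball.mem_nhds hx] with w hw
    rw [hb1 w hw, one_smul]
  obtain ⟨R, hR, h⟩ := local_uc (J := fun y => b y • J y) (α := fun y => b y • α y)
    (contDiff_cutoff hU hJ b hρU) (contDiff_cutoff hU hα b hρU) x0 (half_pos hρ)
    (fun x hx X => by simp only [hb1 x hx, one_smul]; exact hJ2 x (hsub hx) X)
    (fun x hx X => by simp only [hb1 x hx, one_smul]; exact halt x (hsub hx) X)
    (fun x hx X Y => by simp only [hb1 x hx, one_smul]; exact hanti x (hsub hx) X Y)
    (fun x hx X Y Z => by rw [hfd x hx]; exact hcl x (hsub hx) X Y Z)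
  refine ⟨R, hR, fun z hz hzα => ?_⟩
  have h1 := h z hz (hzα.mono fun y hy => by
    change b y • α y = 0
    rw [hy]
    refine ContinuousLinearMap.ext fun u => ContinuousLinearMap.ext fun w => ?_
    exact mul_zero (b y))
  filter_upwards [h1, Metric.ball_mem_nhds x0 (half_pos hρ)] with y hy hyb
  rwa [hb1 y hyb, one_smul] at hy

lemma global_uc {U : Set V2} (hU : IsOpen U) (hconn : IsConnected U)
    {J : V2 → (V2 →L[ℝ] V2)} {α : V2 → F2}
    (hJ : ContDiffOn ℝ ∞ J U) (hα : ContDiffOn ℝ ∞ α U)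
    (hJ2 : ∀ x ∈ U, ∀ X, J x (J x X) = -X)
    (halt : ∀ x ∈ U, ∀ X, α x X X = 0)
    (hanti : ∀ x ∈ U, ∀ X Y, α x (J x X) (J x Y) = -α x X Y)
    (hcl : ∀ x ∈ U, ∀ X Y Z : V2,
      fderiv ℝ α x X Y Z - fderiv ℝ α x Y X Z + fderiv ℝ α x Z X Y = 0)
    (hvan : ∃ V : Set V2, IsOpen V ∧ V.Nonempty ∧ V ⊆ U ∧ ∀ x ∈ V, α x = 0) :
    ∀ x ∈ U, α x = 0 := by
  obtain ⟨V, hV, ⟨v, hv⟩, hVU, hV0⟩ := hvan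
  have hmain : U ⊆ {x | ∀ᶠ y in 𝓝 x, α y = 0} := by
    apply hconn.isPreconnected.subset_of_closure_inter_subset isOpen_setOfPred_eventually_nhds
    · refine ⟨v, hVU hv, ?_⟩
      filter_upwards [hV.mem_nhds hv] with y hy using hV0 y hy
    · rintro x0 ⟨hc, hx0⟩
      obtain ⟨R, hR, h⟩ := local_uc_on hU hJ hα hJ2 halt hanti hcl x0 hx0
      obtain ⟨z, hz, hzd⟩ := Metric.mem_closure_iff.1 hc R hR
      exact h z (by rwa [Metric.mem_ball, dist_comm]) hz
  exact fun x hx => (hmain hx).self_of_nhds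
end Final

end UniqueContinuationAux

/-- local form of Lemma 2.5 of the paper: unique continuation for closed
`J`-anti-invariant 2-forms: if such a form vanishes on a nonempty open subset of a
connected open set `U ⊆ ℂ²`, it vanishes identically on `U`. -/
theorem unique_continuation_anti_invariant_form
    (U : Set (ℂ × ℂ)) (hU : IsOpen U) (hconn : IsConnected U)
    (J : ℂ × ℂ → (ℂ × ℂ →L[ℝ] ℂ × ℂ)) (hJ : IsAlmostComplexOn J U)
    (α : ℂ × ℂ → (ℂ × ℂ →L[ℝ] ℂ × ℂ →L[ℝ] ℝ))
    (hα : IsTwoFormOn α U) (hαJ : IsJAntiInvariantOn J α U)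
    (hαcl : IsClosedTwoFormOn α U)
    (hvan : ∃ V : Set (ℂ × ℂ), IsOpen V ∧ V.Nonempty ∧ V ⊆ U ∧ ∀ x ∈ V, α x = 0) :
    ∀ x ∈ U, α x = 0 := by
  exact global_uc hU hconn hJ.1 hα.1 hJ.2 hα.2 hαJ hαcl hvan
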